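/- Let n ≥ 2 be an integer, r > 0, and v(t) = sin(πt/r). Then (∫₀ʳ (v'(t)² + ((n−1)/4)·(n−1 + (n+1)/sinh²(t))·v(t)²) dt) / (∫₀ʳ v(t)² dt) < (n−1)²/4 + π²/r² + (n−1)(n+1)·π⁴/(12·r³). Consequently, the first Dirichlet eigenvalue of −d²/dt² + V₂ on [0,r] (which equals the second Dirichlet eigenvalue λ₂(B_r) of the geodesic ball of radius r in ℍⁿ) is strictly less than (n−1)²/4 + π²/r² + (n−1)(n+1)·π⁴/(12·r³). -/

import Mathlib

/-- `lam` is a Dirichlet eigenvalue of the Schrödinger operator `-d²/dt² + V` on `[0, r]`. -/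
def IsDirichletEigenvalue (V : ℝ → ℝ) (r lam : ℝ) : Prop :=
  ∃ u : ℝ → ℝ,
    (∃ t ∈ Set.Icc (0:ℝ) r, u t ≠ 0) ∧
    ContinuousOn u (Set.Icc 0 r) ∧
    (∀ t ∈ Set.Ioo (0:ℝ) r, DifferentiableAt ℝ u t) ∧
    ContinuousOn (deriv u) (Set.Icc 0 r) ∧
    (∀ t ∈ Set.Ioo (0:ℝ) r, DifferentiableAt ℝ (deriv u) t) ∧
    u 0 = 0 ∧ u r = 0 ∧
    (∀ t ∈ Set.Ioo (0:ℝ) r, -(deriv (deriv u) t) + V t * u t = lam * u t)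

/-- The Rayleigh quotient `R_V[u] = (∫₀ʳ (u'² + V u²))/(∫₀ʳ u²)` on `[0, r]`. -/
noncomputable def Rayleigh (V u : ℝ → ℝ) (r : ℝ) : ℝ :=
  (∫ t in (0:ℝ)..r, (deriv u t) ^ 2 + V t * (u t) ^ 2) / (∫ t in (0:ℝ)..r, (u t) ^ 2)

/-- The potential `V₂(t) = ((n−1)/4)·(n−1 + (n+1)/sinh² t)` arising from the radial ODE for
the second Dirichlet eigenvalue of the geodesic ball in `ℍⁿ`. -/
noncomputable def V2 (n : ℕ) (t : ℝ) : ℝ :=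
  ((n : ℝ) - 1) / 4 * (((n : ℝ) - 1) + ((n : ℝ) + 1) / (Real.sinh t) ^ 2)

/-!
Since `sin² (π t / r) < (π t / r)²` for `t ≠ 0`, the singular part of the Rayleigh quotient is
controlled by `∫₀^∞ t² / sinh² t = π² / 6`, which follows from `1 / sinh² t = ∑ 4 k exp (-2 k t)`
and `∑ 1 / k² = π² / 6`.

A Dirichlet eigenvalue below the Rayleigh quotient is found by shooting from a positive solution
`φ` at some energy `E` that vanishes at `0`; for `V₂` it is `φ = sinh ^ ((n + 1) / 2)` at `E = -n`.
Writing `u = φ w` turns `-u'' + V u = (E + κ) u` into the radial equation `(φ² w')' = -κ φ² w`,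
whose singularity at `0` is harmless: its solution with `w 0 = 1` is an entire power series in `κ`.
By Picone's identity, `E + κ` is at most the Rayleigh quotient whenever `w` is positive on
`[0, r]`. Hence `w` acquires a zero for some `κ` with `E + κ` at most the Rayleigh quotient, and
the zero first appears at `r` because a nonnegative `w` is decreasing.
-/

open MeasureTheory Set Filter Topology Real

section SinhIntegral

lemma integral_pow_mul_exp_neg_mul_Ioi {b : ℝ} (hb : 0 < b) (m : ℕ) :
    ∫ t in Ioi (0 : ℝ), t ^ m * exp (-(b * t)) = m.factorial / b ^ (m + 1) := by
  have h := integral_rpow_mul_exp_neg_mul_Ioi (a := m + 1) (by positivity) hb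
  simp only [add_sub_cancel_right, rpow_natCast, Gamma_nat_eq_factorial] at h
  rw [h, ← Nat.cast_add_one, rpow_natCast, one_div, inv_pow, ← div_eq_inv_mul]

lemma integrableOn_pow_mul_exp_neg_mul_Ioi {b : ℝ} (hb : 0 < b) (m : ℕ) :
    IntegrableOn (fun t : ℝ => t ^ m * exp (-(b * t))) (Ioi 0) := by
  refine not_imp_comm.1 integral_undef ?_
  rw [integral_pow_mul_exp_neg_mul_Ioi hb]
  positivity

lemma hasSum_inv_sinh_sq {t : ℝ} (ht : 0 < t) :
    HasSum (fun k : ℕ => 4 * k * exp (-(2 * k * t))) (1 / sinh t ^ 2) := by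
  have hlt : ‖exp (-(2 * t))‖ < 1 := by
    rw [norm_of_nonneg (exp_nonneg _), exp_lt_one_iff]
    linarith
  have hval : 4 * (exp (-(2 * t)) / (1 - exp (-(2 * t))) ^ 2) = 1 / sinh t ^ 2 := by
    have hsq : exp (-(2 * t)) = exp (-t) ^ 2 := by rw [← exp_nat_mul]; push_cast; ring_nf
    have hsub : 1 - exp (-(2 * t)) = 2 * exp (-t) * sinh t := by
      have hmul : exp (-t) * exp t = 1 := by rw [← exp_add, neg_add_cancel, exp_zero]
      rw [sinh_eq, hsq]
      linear_combination -hmul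
    have hsinh := (sinh_pos_iff.2 ht).ne'
    rw [hsub, hsq]
    field_simp
    norm_num
  rw [← hval]
  refine ((hasSum_coe_mul_geometric_of_norm_lt_one hlt).mul_left 4).congr_fun fun k => ?_
  rw [← exp_nat_mul]
  ring_nf

lemma hasSum_sq_mul_exp {t : ℝ} (ht : 0 < t) :
    HasSum (fun k : ℕ => 4 * k * (t ^ 2 * exp (-(2 * k * t)))) (t ^ 2 / sinh t ^ 2) := by
  rw [← mul_one_div]
  exact ((hasSum_inv_sinh_sq ht).mul_left (t ^ 2)).congr_fun fun k => by ring

lemma integral_sq_mul_exp (k : ℕ) :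
    ∫ t in Ioi (0 : ℝ), 4 * k * (t ^ 2 * exp (-(2 * k * t))) = 1 / (k : ℝ) ^ 2 := by
  rcases k.eq_zero_or_pos with rfl | hk
  · simp
  rw [integral_const_mul, integral_pow_mul_exp_neg_mul_Ioi (by positivity)]
  simp only [Nat.factorial_two, Nat.cast_ofNat]
  field_simp
  ring

lemma integrableOn_sq_mul_exp (k : ℕ) :
    IntegrableOn (fun t : ℝ => 4 * k * (t ^ 2 * exp (-(2 * k * t)))) (Ioi 0) := by
  rcases k.eq_zero_or_pos with rfl | hk
  · simp
  · exact (integrableOn_pow_mul_exp_neg_mul_Ioi (by positivity) 2).const_mul _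

theorem integral_sq_div_sinh_sq_Ioi : ∫ t in Ioi (0 : ℝ), t ^ 2 / sinh t ^ 2 = π ^ 2 / 6 := by
  have hnorm : Summable fun k : ℕ =>
      ∫ t in Ioi (0 : ℝ), ‖4 * k * (t ^ 2 * exp (-(2 * k * t)))‖ := by
    refine hasSum_zeta_two.summable.congr fun k => ?_
    rw [← integral_sq_mul_exp]
    exact integral_congr_ae (.of_forall fun t => (norm_of_nonneg (by positivity)).symm)
  have hsum := hasSum_integral_of_summable_integral_norm integrableOn_sq_mul_exp hnorm
  simp_rw [integral_sq_mul_exp] at hsum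
  rw [← hsum.unique hasSum_zeta_two]
  exact setIntegral_congr_fun measurableSet_Ioi fun t ht => (hasSum_sq_mul_exp ht).tsum_eq.symm

lemma integrableOn_sq_div_sinh_sq_Ioi :
    IntegrableOn (fun t : ℝ => t ^ 2 / sinh t ^ 2) (Ioi 0) := by
  refine not_imp_comm.1 integral_undef ?_
  rw [integral_sq_div_sinh_sq_Ioi]
  positivity

lemma abs_le_abs_sinh (t : ℝ) : |t| ≤ |sinh t| := by
  rw [abs_sinh]
  exact self_le_sinh_iff.2 (abs_nonneg t)

lemma abs_sin_mul_le (b t : ℝ) : |sin (b * t)| ≤ |b| * |sinh t| :=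
  calc |sin (b * t)| ≤ |b * t| := abs_sin_le_abs
    _ = |b| * |t| := abs_mul b t
    _ ≤ |b| * |sinh t| := mul_le_mul_of_nonneg_left (abs_le_abs_sinh t) (abs_nonneg b)

lemma intervalIntegrable_sin_sq_div_sinh_sq (b x y : ℝ) :
    IntervalIntegrable (fun t => sin (b * t) ^ 2 / sinh t ^ 2) volume x y := by
  have hmeas : Measurable fun t => sin (b * t) ^ 2 / sinh t ^ 2 := by
    have := measurable_sinh
    fun_prop
  refine (intervalIntegrable_const (c := b ^ 2)).mono_fun' hmeas.aestronglyMeasurable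
    (.of_forall fun t => ?_)
  beta_reduce
  rw [norm_of_nonneg (by positivity)]
  refine div_le_of_le_mul₀ (sq_nonneg _) (sq_nonneg _) ?_
  rw [← mul_pow, sq_le_sq, abs_mul]
  exact abs_sin_mul_le b t

lemma integral_sin_sq_div_sinh_sq_lt {b r : ℝ} (hb : b ≠ 0) (hr : 0 < r) :
    ∫ t in (0 : ℝ)..r, sin (b * t) ^ 2 / sinh t ^ 2 < b ^ 2 * (π ^ 2 / 6) := by
  have hsin := intervalIntegrable_sin_sq_div_sinh_sq b 0 r
  have hsq : IntervalIntegrable (fun t : ℝ => b ^ 2 * (t ^ 2 / sinh t ^ 2)) volume 0 r :=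
    ((intervalIntegrable_iff_integrableOn_Ioc_of_le hr.le).2
      (integrableOn_sq_div_sinh_sq_Ioi.mono_set Ioc_subset_Ioi_self)).const_mul _
  have hpos := intervalIntegral.intervalIntegral_pos_of_pos_on (hsq.sub hsin) (fun t ht => by
    have hsinh := sinh_pos_iff.2 ht.1
    have hlt := sin_sq_lt_sq (mul_ne_zero hb ht.1.ne')
    rw [← mul_div_assoc, ← sub_div, ← mul_pow]
    exact div_pos (sub_pos.2 hlt) (by positivity)) hr
  rw [intervalIntegral.integral_sub hsq hsin, sub_pos,
    intervalIntegral.integral_const_mul] at hpos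
  refine hpos.trans_le (mul_le_mul_of_nonneg_left ?_ (sq_nonneg b))
  rw [intervalIntegral.integral_of_le hr.le, ← integral_sq_div_sinh_sq_Ioi]
  exact setIntegral_mono_set integrableOn_sq_div_sinh_sq_Ioi (.of_forall fun t => by positivity)
    Ioc_subset_Ioi_self.eventuallyLE

end SinhIntegral

section Radial

/-- A weight `p` on `ℝ` which, like the density of geodesic spheres as a function of the radius,
is radially increasing and vanishes at most at the centre. Extending `p` to negative radii as an
even function makes radial solutions differentiable at the centre. -/
structure IsRadialWeight (p : ℝ → ℝ) : Prop where
  continuous : Continuous p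
  le_of_abs_le : ∀ {x y : ℝ}, |x| ≤ |y| → p x ≤ p y
  pos_of_ne_zero : ∀ {x : ℝ}, x ≠ 0 → 0 < p x

/-- The primitive `p(s)⁻¹ ∫₀ˢ p f`, i.e. the bounded solution `q` of `(p q)' = p f`. Where
`p 0 = 0`, division by zero gives the value `0` at the centre, which is also the limit there. -/
noncomputable def weightedPrimitive (p f : ℝ → ℝ) (s : ℝ) : ℝ :=
  (∫ x in (0 : ℝ)..s, p x * f x) / p s

/-- The coefficient of `(-κ) ^ k` in `radialSolution`: the `k`-fold application of the inverse
`f ↦ ∫₀ᵗ p⁻¹ ∫₀ˢ p f` of the radial Laplacian to the constant `1`. -/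
noncomputable def radialCoeff (p : ℝ → ℝ) : ℕ → ℝ → ℝ
  | 0 => fun _ => 1
  | k + 1 => fun t => ∫ s in (0 : ℝ)..t, weightedPrimitive p (radialCoeff p k) s

/-- The solution of the radial equation `(p w')' = -κ p w` with `w 0 = 1` and `w' 0 = 0`, as an
entire power series in the spectral parameter `κ`. -/
noncomputable def radialSolution (p : ℝ → ℝ) (κ t : ℝ) : ℝ :=
  ∑' k : ℕ, (-κ) ^ k * radialCoeff p k t

variable {p f : ℝ → ℝ} {s t κ : ℝ}

lemma hasSum_intervalIntegral_of_norm_le {ι F : Type*} [Countable ι] [NormedAddCommGroup F]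
    [NormedSpace ℝ F] {f : ι → ℝ → F} {g : ℝ → F} {M : ι → ℝ} {a b : ℝ}
    (hf : ∀ i, Continuous (f i)) (hM : Summable M) (hfM : ∀ i, ∀ x ∈ uIoc a b, ‖f i x‖ ≤ M i)
    (hfg : ∀ x ∈ uIoc a b, HasSum (fun i => f i x) (g x)) :
    HasSum (fun i => ∫ x in a..b, f i x) (∫ x in a..b, g x) :=
  intervalIntegral.hasSum_integral_of_dominated_convergence (fun i _ => M i)
    (fun i => (hf i).aestronglyMeasurable) (fun i => .of_forall (hfM i))
    (.of_forall fun _ _ => hM) intervalIntegrable_const (.of_forall hfg)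

lemma abs_le_abs_of_mem_uIoc_zero (ht : t ∈ uIoc 0 s) : |t| ≤ |s| := by
  simpa using abs_sub_left_of_mem_uIcc (uIoc_subset_uIcc ht)

lemma weightedPrimitive_zero_right : weightedPrimitive p f 0 = 0 := by
  simp [weightedPrimitive]

lemma weightedPrimitive_const_mul (c : ℝ) :
    weightedPrimitive p (fun x => c * f x) s = c * weightedPrimitive p f s := by
  simp_rw [weightedPrimitive, mul_left_comm _ c]
  rw [intervalIntegral.integral_const_mul, mul_div_assoc]

lemma radialSolution_zero_left : radialSolution p 0 t = 1 := by
  rw [radialSolution, tsum_eq_single 0 fun k hk => by simp [hk]]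
  simp [radialCoeff]

namespace IsRadialWeight

lemma nonneg (hp : IsRadialWeight p) (x : ℝ) : 0 ≤ p x :=
  (isClosed_Ici.preimage hp.continuous).closure_subset_iff.2
    (fun _ hy => (hp.pos_of_ne_zero hy).le) (dense_compl_singleton 0 x)

lemma sq (hp : IsRadialWeight p) : IsRadialWeight (p ^ 2) where
  continuous := hp.continuous.pow 2
  le_of_abs_le h := pow_le_pow_left₀ (hp.nonneg _) (hp.le_of_abs_le h) 2
  pos_of_ne_zero h := pow_pos (hp.pos_of_ne_zero h) 2

lemma norm_mul_le (hp : IsRadialWeight p) {M : ℝ} (hts : |t| ≤ |s|) (hf : ‖f t‖ ≤ M) :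
    ‖p t * f t‖ ≤ p s * M := by
  rw [norm_mul, norm_of_nonneg (hp.nonneg t)]
  exact mul_le_mul (hp.le_of_abs_le hts) hf (norm_nonneg _) (hp.nonneg s)

lemma abs_weightedPrimitive_le (hp : IsRadialWeight p) {M : ℝ}
    (hf : ∀ x, |x| ≤ |s| → |f x| ≤ M) : |weightedPrimitive p f s| ≤ |s| * M := by
  have hM : 0 ≤ M := (abs_nonneg _).trans (hf s le_rfl)
  rw [weightedPrimitive, abs_div, abs_of_nonneg (hp.nonneg s)]
  refine div_le_of_le_mul₀ (hp.nonneg s) (by positivity) ?_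
  have hbound : ∀ x ∈ uIoc 0 s, ‖p x * f x‖ ≤ p s * M := fun x hx => by
    have hxs := abs_le_abs_of_mem_uIoc_zero hx
    exact hp.norm_mul_le hxs (hf x hxs)
  simpa [mul_comm, mul_assoc, mul_left_comm] using
    intervalIntegral.norm_integral_le_of_norm_le_const hbound

lemma hasDerivAt_weightedPrimitive (hp : IsRadialWeight p) (hf : Continuous f) {p' : ℝ}
    (hp' : HasDerivAt p p' s) (hs : s ≠ 0) :
    HasDerivAt (weightedPrimitive p f) (f s - p' / p s * weightedPrimitive p f s) s := by
  have hps := (hp.pos_of_ne_zero hs).ne'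
  have hint := ((hp.continuous.mul hf).integral_hasStrictDerivAt 0 s).hasDerivAt
  refine (hint.fun_div hp' hps).congr_deriv ?_
  simp only [weightedPrimitive, Pi.mul_apply]
  field_simp

lemma continuous_weightedPrimitive (hp : IsRadialWeight p) (hf : Continuous f) :
    Continuous (weightedPrimitive p f) := by
  refine continuous_iff_continuousAt.2 fun s => ?_
  rcases eq_or_ne s 0 with rfl | hs
  · obtain ⟨M, hM⟩ :=
      (isCompact_Icc (a := (-1 : ℝ)) (b := 1)).exists_bound_of_continuousOn hf.continuousOn
    rw [ContinuousAt, weightedPrimitive_zero_right]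
    refine squeeze_zero_norm' (a := fun s => |s| * M) ?_ ?_
    · filter_upwards [Metric.ball_mem_nhds (0 : ℝ) one_pos] with s hs
      rw [mem_ball_zero_iff, Real.norm_eq_abs] at hs
      exact hp.abs_weightedPrimitive_le fun x hx => hM x (abs_le.1 (hx.trans hs.le))
    · simpa using (continuous_abs.mul_const M).tendsto 0
  · have hint := (hp.continuous.mul hf).integral_hasStrictDerivAt 0 s
    exact hint.hasDerivAt.continuousAt.div hp.continuous.continuousAt (hp.pos_of_ne_zero hs).ne'

lemma hasDerivAt_integral_weightedPrimitive (hp : IsRadialWeight p) (hf : Continuous f) (t : ℝ) :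
    HasDerivAt (fun t => ∫ s in (0 : ℝ)..t, weightedPrimitive p f s) (weightedPrimitive p f t) t :=
  ((hp.continuous_weightedPrimitive hf).integral_hasStrictDerivAt 0 t).hasDerivAt

lemma continuous_radialCoeff (hp : IsRadialWeight p) (k : ℕ) : Continuous (radialCoeff p k) := by
  induction k with
  | zero => exact continuous_const
  | succ k ih =>
    exact continuous_iff_continuousAt.2 fun t =>
      (hp.hasDerivAt_integral_weightedPrimitive ih t).continuousAt

lemma abs_radialCoeff_le (hp : IsRadialWeight p) (k : ℕ) (t : ℝ) :
    |radialCoeff p k t| ≤ |t| ^ (2 * k) / k.factorial := by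
  induction k generalizing t with
  | zero => simp [radialCoeff]
  | succ k ih =>
    have hprim (s : ℝ) :
        ‖weightedPrimitive p (radialCoeff p k) s‖ ≤ |s - 0| ^ (2 * k + 1) / k.factorial := by
      have := hp.abs_weightedPrimitive_le (f := radialCoeff p k) (s := s)
        (M := |s| ^ (2 * k) / k.factorial) fun x hx => (ih x).trans (by gcongr)
      rwa [sub_zero, pow_succ', mul_div_assoc]
    have hint : IntegrableOn (fun s : ℝ => |s - 0| ^ (2 * k + 1) / k.factorial) (uIoc 0 t) :=
      (Continuous.intervalIntegrable (by fun_prop) 0 t).def'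
    calc |radialCoeff p (k + 1) t|
        = ‖∫ s in uIoc 0 t, weightedPrimitive p (radialCoeff p k) s‖ := by
          rw [radialCoeff, ← Real.norm_eq_abs, intervalIntegral.norm_integral_eq_norm_integral_uIoc]
      _ ≤ ∫ s in uIoc 0 t, |s - 0| ^ (2 * k + 1) / k.factorial :=
          norm_integral_le_of_norm_le hint (.of_forall hprim)
      _ = |t| ^ (2 * (k + 1)) / ((2 * k + 2) * k.factorial) := by
          rw [integral_div, integral_pow_abs_sub_uIoc, sub_zero, div_div]
          push_cast
          ring_nf
      _ ≤ |t| ^ (2 * (k + 1)) / (k + 1).factorial := by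
          rw [Nat.factorial_succ]
          push_cast
          gcongr
          · linarith
          · norm_num

lemma norm_radialSolution_term_le (hp : IsRadialWeight p) {K R : ℝ} (hκ : |κ| ≤ K) (ht : |t| ≤ R)
    (k : ℕ) : ‖(-κ) ^ k * radialCoeff p k t‖ ≤ (K * R ^ 2) ^ k / k.factorial := by
  have hK : 0 ≤ K := (abs_nonneg κ).trans hκ
  rw [norm_mul, norm_pow, norm_neg, mul_pow, ← pow_mul, mul_div_assoc]
  exact mul_le_mul (by gcongr; exact hκ) ((hp.abs_radialCoeff_le k t).trans (by gcongr))
    (norm_nonneg _) (by positivity)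

lemma hasSum_radialSolution (hp : IsRadialWeight p) (κ t : ℝ) :
    HasSum (fun k => (-κ) ^ k * radialCoeff p k t) (radialSolution p κ t) :=
  (Summable.of_norm_bounded (Real.summable_pow_div_factorial _)
    (hp.norm_radialSolution_term_le le_rfl le_rfl)).hasSum

lemma continuous_uncurry_radialSolution (hp : IsRadialWeight p) :
    Continuous (fun q : ℝ × ℝ => radialSolution p q.1 q.2) := by
  refine continuous_iff_continuousAt.2 fun q₀ => ?_
  set U : Set (ℝ × ℝ) := {q | |q.1| < |q₀.1| + 1 ∧ |q.2| < |q₀.2| + 1} with hU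
  have hUopen : IsOpen U := by
    refine IsOpen.and (isOpen_lt ?_ ?_) (isOpen_lt ?_ ?_) <;> fun_prop
  have hcont : ContinuousOn (fun q : ℝ × ℝ => radialSolution p q.1 q.2) U := by
    refine continuousOn_tsum (fun k => ?_) (Real.summable_pow_div_factorial _)
      fun k q hq => hp.norm_radialSolution_term_le hq.1.le hq.2.le k
    have := hp.continuous_radialCoeff k
    fun_prop
  exact hcont.continuousAt (hUopen.mem_nhds (by simp [hU]))

lemma continuous_radialSolution (hp : IsRadialWeight p) (κ : ℝ) :
    Continuous (radialSolution p κ) :=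
  hp.continuous_uncurry_radialSolution.comp (Continuous.prodMk_right κ)

lemma hasSum_weightedPrimitive (hp : IsRadialWeight p) {F : ℕ → ℝ → ℝ} {M : ℕ → ℝ}
    (hF : ∀ k, Continuous (F k)) (hM : Summable M) (hFM : ∀ k x, |x| ≤ |s| → ‖F k x‖ ≤ M k)
    (hf : ∀ x, HasSum (fun k => F k x) (f x)) :
    HasSum (fun k => weightedPrimitive p (F k) s) (weightedPrimitive p f s) := by
  refine (hasSum_intervalIntegral_of_norm_le (fun k => hp.continuous.mul (hF k))
    (hM.mul_left (p s)) (fun k x hx => ?_) fun x _ => (hf x).mul_left (p x)).div_const (p s)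
  have hxs := abs_le_abs_of_mem_uIoc_zero hx
  exact hp.norm_mul_le hxs (hFM k x hxs)

lemma radialSolution_eq_one_sub (hp : IsRadialWeight p) (κ t : ℝ) :
    radialSolution p κ t
      = 1 - κ * ∫ s in (0 : ℝ)..t, weightedPrimitive p (radialSolution p κ) s := by
  have hterm (k : ℕ) : Continuous fun x => (-κ) ^ k * radialCoeff p k x :=
    (hp.continuous_radialCoeff k).const_mul _
  have hsummable (R : ℝ) := Real.summable_pow_div_factorial (|κ| * R ^ 2)
  have hprim (s : ℝ) := hp.hasSum_weightedPrimitive (s := s) hterm (hsummable |s|)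
    (fun k x hx => hp.norm_radialSolution_term_le le_rfl hx k) (hp.hasSum_radialSolution κ)
  have hint := hasSum_intervalIntegral_of_norm_le (a := 0) (b := t)
    (fun k => hp.continuous_weightedPrimitive (hterm k)) ((hsummable |t|).mul_left |t|)
    (fun k s hs => by
      have hst := abs_le_abs_of_mem_uIoc_zero hs
      refine (hp.abs_weightedPrimitive_le fun x hx =>
        hp.norm_radialSolution_term_le le_rfl (hx.trans hst) k).trans ?_
      gcongr) fun s _ => hprim s
  have htail : HasSum (fun k => (-κ) ^ (k + 1) * radialCoeff p (k + 1) t)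
      (-κ * ∫ s in (0 : ℝ)..t, weightedPrimitive p (radialSolution p κ) s) := by
    refine (hint.mul_left (-κ)).congr_fun fun k => ?_
    simp_rw [weightedPrimitive_const_mul, intervalIntegral.integral_const_mul, radialCoeff]
    ring
  have heq := (hp.hasSum_radialSolution κ t).unique htail.zero_add
  simpa [radialCoeff, sub_eq_add_neg] using heq

lemma radialSolution_zero_right (hp : IsRadialWeight p) (κ : ℝ) : radialSolution p κ 0 = 1 := by
  simp [hp.radialSolution_eq_one_sub κ 0]

lemma hasDerivAt_radialSolution (hp : IsRadialWeight p) (κ t : ℝ) :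
    HasDerivAt (radialSolution p κ) (-κ * weightedPrimitive p (radialSolution p κ) t) t := by
  have h := ((hp.hasDerivAt_integral_weightedPrimitive
    (hp.continuous_radialSolution κ) t).const_mul κ).const_sub 1
  rw [funext (hp.radialSolution_eq_one_sub κ), neg_mul]
  simpa only [← hp.radialSolution_eq_one_sub κ] using h

lemma antitoneOn_radialSolution (hp : IsRadialWeight p) {r : ℝ} (hκ : 0 ≤ κ)
    (hnonneg : ∀ t ∈ Icc 0 r, 0 ≤ radialSolution p κ t) :
    AntitoneOn (radialSolution p κ) (Icc 0 r) := by
  refine antitoneOn_of_hasDerivWithinAt_nonpos (convex_Icc 0 r)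
    (hp.continuous_radialSolution κ).continuousOn
    (fun t _ => (hp.hasDerivAt_radialSolution κ t).hasDerivWithinAt) fun t ht => ?_
  rw [interior_Icc] at ht
  have hprim : 0 ≤ weightedPrimitive p (radialSolution p κ) t :=
    div_nonneg (intervalIntegral.integral_nonneg ht.1.le fun x hx =>
      mul_nonneg (hp.nonneg x) (hnonneg x ⟨hx.1, hx.2.trans ht.2.le⟩)) (hp.nonneg t)
  exact mul_nonpos_of_nonpos_of_nonneg (neg_nonpos.2 hκ) hprim

/-- The minimum over `[0, r]` depends continuously on `κ` and equals `1` at `κ = 0`, so it vanishes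
for some `κ ≤ K`. There the solution is nonnegative, hence antitone, so its minimum is at `r`. -/
lemma exists_radialSolution_eq_zero (hp : IsRadialWeight p) {r K : ℝ} (hr : 0 ≤ r) (hK : 0 ≤ K)
    (hbound : ∀ κ, (∀ t ∈ Icc 0 r, 0 < radialSolution p κ t) → κ ≤ K) :
    ∃ κ ∈ Icc 0 K, radialSolution p κ r = 0 := by
  set m : ℝ → ℝ := fun κ => sInf (radialSolution p κ '' Icc 0 r)
  have hmcont : Continuous m :=
    isCompact_Icc.continuous_sInf hp.continuous_uncurry_radialSolution
  have hmin (κ : ℝ) : ∃ t ∈ Icc 0 r, radialSolution p κ t = m κ ∧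
      ∀ x ∈ Icc 0 r, m κ ≤ radialSolution p κ x := by
    obtain ⟨t, ht, heq, hle⟩ := isCompact_Icc.exists_sInf_image_eq_and_le
      (nonempty_Icc.2 hr) (hp.continuous_radialSolution κ).continuousOn
    exact ⟨t, ht, heq.symm, fun x hx => heq.trans_le (hle x hx)⟩
  have hm0 : m 0 = 1 := by
    obtain ⟨t, -, heq, -⟩ := hmin 0
    rw [← heq, radialSolution_zero_left]
  have hm_nonpos : ∀ κ ∈ Ioi K, m κ ≤ 0 := fun κ hκ => by
    obtain ⟨t, -, -, hle⟩ := hmin κ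
    by_contra! hpos
    exact (hbound κ fun x hx => hpos.trans_le (hle x hx)).not_gt hκ
  have hmK : m K ≤ 0 := ContinuousWithinAt.closure_le (s := Ioi K) (by simp)
    hmcont.continuousWithinAt continuousWithinAt_const hm_nonpos
  obtain ⟨κ, hκ, hκ0⟩ : (0 : ℝ) ∈ m '' Icc 0 K :=
    intermediate_value_Icc' hK hmcont.continuousOn ⟨hmK, by simp [hm0]⟩
  obtain ⟨t, ht, heq, hle⟩ := hmin κ
  rw [hκ0] at heq hle
  have hr_mem : r ∈ Icc 0 r := right_mem_Icc.2 hr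
  exact ⟨κ, hκ,
    le_antisymm (heq ▸ hp.antitoneOn_radialSolution hκ.1 hle ht hr_mem ht.2) (hle r hr_mem)⟩

end IsRadialWeight

end Radial

section Picone

variable {V u u' v : ℝ → ℝ} {t lam : ℝ}

/-- Picone's identity. -/
lemma hasDerivAt_sq_mul_div (hu : HasDerivAt u (u' t) t)
    (hu' : HasDerivAt u' ((V t - lam) * u t) t) (hut : u t ≠ 0) (hv : DifferentiableAt ℝ v t) :
    HasDerivAt (fun t => v t ^ 2 * (u' t / u t))
      (deriv v t ^ 2 + V t * v t ^ 2 - lam * v t ^ 2 - (deriv v t - u' t / u t * v t) ^ 2) t := by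
  refine ((hv.hasDerivAt.fun_pow 2).fun_mul (hu'.fun_div hu hut)).congr_deriv ?_
  simp only [Nat.cast_ofNat, Nat.add_one_sub_one, pow_one]
  field_simp
  ring

lemma mul_integral_sq_le_integral_energy {a b : ℝ} (hab : a ≤ b)
    (hu : ∀ t ∈ Ioo a b, HasDerivAt u (u' t) t)
    (hu' : ∀ t ∈ Ioo a b, HasDerivAt u' ((V t - lam) * u t) t) (hu0 : ∀ t ∈ Ioo a b, u t ≠ 0)
    (hv : ∀ t ∈ Ioo a b, DifferentiableAt ℝ v t) (hva : v a = 0) (hvb : v b = 0)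
    (hboundary : ContinuousOn (fun t => v t ^ 2 * (u' t / u t)) (Icc a b))
    (hsq : IntervalIntegrable (fun t => v t ^ 2) volume a b)
    (henergy : IntervalIntegrable (fun t => deriv v t ^ 2 + V t * v t ^ 2) volume a b) :
    lam * ∫ t in a..b, v t ^ 2 ≤ ∫ t in a..b, deriv v t ^ 2 + V t * v t ^ 2 := by
  have hint := henergy.sub (hsq.const_mul lam)
  have hle := intervalIntegral.sub_le_integral_of_hasDeriv_right_of_le hab hboundary
    (fun t ht => (hasDerivAt_sq_mul_div (hu t ht) (hu' t ht) (hu0 t ht) (hv t ht)).hasDerivWithinAt)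
    ((intervalIntegrable_iff_integrableOn_Icc_of_le hab).1 hint)
    fun t _ => sub_le_self _ (sq_nonneg _)
  rw [intervalIntegral.integral_sub henergy (hsq.const_mul lam),
    intervalIntegral.integral_const_mul] at hle
  simpa [hva, hvb] using hle

end Picone

section GroundState

/-- `φ`, with derivative `φ'`, is a positive increasing solution of `-φ'' + V φ = E φ` on `(0, r)`
vanishing at `0`. It is extended evenly to negative arguments to be a radial weight. -/
structure IsPositiveSolution (V : ℝ → ℝ) (E r : ℝ) (φ φ' : ℝ → ℝ) : Prop
    extends IsRadialWeight φ where
  map_zero : φ 0 = 0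
  hasDerivAt : ∀ t, HasDerivAt φ (φ' t) t
  continuous_deriv : Continuous φ'
  hasDerivAt_deriv : ∀ t ∈ Ioo 0 r, HasDerivAt φ' ((V t - E) * φ t) t

/-- A function vanishing at `0` and `r` whose Rayleigh quotient is meaningful, and which vanishes
fast enough at `0` to absorb the singularity of the logarithmic derivative of `φ`. -/
structure IsTestFunction (V φ φ' : ℝ → ℝ) (r : ℝ) (v : ℝ → ℝ) : Prop where
  map_left : v 0 = 0
  map_right : v r = 0
  continuousOn : ContinuousOn v (Icc 0 r)
  differentiableAt : ∀ t ∈ Ioo 0 r, DifferentiableAt ℝ v t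
  intervalIntegrable_energy :
    IntervalIntegrable (fun t => deriv v t ^ 2 + V t * v t ^ 2) volume 0 r
  integral_sq_pos : 0 < ∫ t in (0 : ℝ)..r, v t ^ 2
  continuousOn_boundary : ContinuousOn (fun t => v t ^ 2 * (φ' t / φ t)) (Icc 0 r)

/-- The solution of `-u'' + V u = (E + κ) u` obtained from a solution `φ` at energy `E` by the
ground state transform `u = φ w`, under which the equation becomes `(φ² w')' = -κ φ² w`. -/
noncomputable def shootingSolution (φ : ℝ → ℝ) (κ t : ℝ) : ℝ :=
  φ t * radialSolution (φ ^ 2) κ t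

/-- The derivative of `shootingSolution`, where `φ'` is the derivative of `φ`. -/
noncomputable def shootingDeriv (φ φ' : ℝ → ℝ) (κ t : ℝ) : ℝ :=
  φ' t * radialSolution (φ ^ 2) κ t
    + φ t * (-κ * weightedPrimitive (φ ^ 2) (radialSolution (φ ^ 2) κ) t)

namespace IsPositiveSolution

variable {V φ φ' v : ℝ → ℝ} {E r κ : ℝ}

lemma hasDerivAt_shootingSolution (hφ : IsPositiveSolution V E r φ φ') (κ t : ℝ) :
    HasDerivAt (shootingSolution φ κ) (shootingDeriv φ φ' κ t) t :=
  (hφ.hasDerivAt t).fun_mul (hφ.sq.hasDerivAt_radialSolution κ t)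

lemma hasDerivAt_shootingDeriv (hφ : IsPositiveSolution V E r φ φ') (κ : ℝ) {t : ℝ}
    (ht : t ∈ Ioo 0 r) :
    HasDerivAt (shootingDeriv φ φ' κ) ((V t - (E + κ)) * shootingSolution φ κ t) t := by
  have hφt := (hφ.pos_of_ne_zero ht.1.ne').ne'
  have hprim := hφ.sq.hasDerivAt_weightedPrimitive (hφ.sq.continuous_radialSolution κ)
    ((hφ.hasDerivAt t).pow 2) ht.1.ne'
  refine (((hφ.hasDerivAt_deriv t ht).fun_mul (hφ.sq.hasDerivAt_radialSolution κ t)).fun_add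
    ((hφ.hasDerivAt t).fun_mul (hprim.const_mul (-κ)))).congr_deriv ?_
  simp only [shootingSolution, Pi.pow_apply, Nat.cast_ofNat, Nat.add_one_sub_one, pow_one]
  field_simp
  ring

lemma deriv_shootingSolution (hφ : IsPositiveSolution V E r φ φ') (κ : ℝ) :
    deriv (shootingSolution φ κ) = shootingDeriv φ φ' κ :=
  funext fun t => (hφ.hasDerivAt_shootingSolution κ t).deriv

lemma continuous_weightedPrimitive_radialSolution (hφ : IsPositiveSolution V E r φ φ') (κ : ℝ) :
    Continuous (weightedPrimitive (φ ^ 2) (radialSolution (φ ^ 2) κ)) :=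
  hφ.sq.continuous_weightedPrimitive (hφ.sq.continuous_radialSolution κ)

lemma continuous_shootingDeriv (hφ : IsPositiveSolution V E r φ φ') (κ : ℝ) :
    Continuous (shootingDeriv φ φ' κ) :=
  (hφ.continuous_deriv.mul (hφ.sq.continuous_radialSolution κ)).add
    (hφ.continuous.mul ((hφ.continuous_weightedPrimitive_radialSolution κ).const_mul (-κ)))

lemma exists_shootingSolution_ne_zero (hφ : IsPositiveSolution V E r φ φ') (hr : 0 < r) (κ : ℝ) :
    ∃ t ∈ Icc 0 r, shootingSolution φ κ t ≠ 0 := by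
  have hne : ∀ᶠ t in 𝓝[>] (0 : ℝ), radialSolution (φ ^ 2) κ t ≠ 0 :=
    ((hφ.sq.continuous_radialSolution κ).continuousAt.eventually_ne
      (by simp [hφ.sq.radialSolution_zero_right])).filter_mono nhdsWithin_le_nhds
  obtain ⟨t, hwt, ht⟩ := (hne.and (Ioo_mem_nhdsGT hr)).exists
  exact ⟨t, Ioo_subset_Icc_self ht, mul_ne_zero (hφ.pos_of_ne_zero ht.1.ne').ne' hwt⟩

lemma isDirichletEigenvalue_of_radialSolution_eq_zero (hφ : IsPositiveSolution V E r φ φ')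
    (hr : 0 < r) (hκ : radialSolution (φ ^ 2) κ r = 0) : IsDirichletEigenvalue V r (E + κ) := by
  have hu := hφ.hasDerivAt_shootingSolution κ
  have hu' (t : ℝ) (ht : t ∈ Ioo 0 r) := hφ.hasDerivAt_shootingDeriv κ ht
  refine ⟨shootingSolution φ κ, hφ.exists_shootingSolution_ne_zero hr κ,
    fun t _ => (hu t).continuousAt.continuousWithinAt, fun t _ => (hu t).differentiableAt, ?_⟩
  rw [hφ.deriv_shootingSolution κ]
  refine ⟨(hφ.continuous_shootingDeriv κ).continuousOn, fun t ht => (hu' t ht).differentiableAt,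
    by simp [shootingSolution, hφ.map_zero], by simp [shootingSolution, hκ], fun t ht => ?_⟩
  rw [(hu' t ht).deriv]
  ring

lemma continuousOn_boundary_shootingSolution (hφ : IsPositiveSolution V E r φ φ')
    (hv : IsTestFunction V φ φ' r v) (hpos : ∀ t ∈ Icc 0 r, 0 < radialSolution (φ ^ 2) κ t) :
    ContinuousOn (fun t => v t ^ 2 * (shootingDeriv φ φ' κ t / shootingSolution φ κ t))
      (Icc 0 r) := by
  have hratio : ContinuousOn (fun t => -κ * weightedPrimitive (φ ^ 2) (radialSolution (φ ^ 2) κ) t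
      / radialSolution (φ ^ 2) κ t) (Icc 0 r) :=
    ((hφ.continuous_weightedPrimitive_radialSolution κ).const_mul (-κ)).continuousOn.div
      (hφ.sq.continuous_radialSolution κ).continuousOn fun t ht => (hpos t ht).ne'
  refine (hv.continuousOn_boundary.add ((hv.continuousOn.pow 2).mul hratio)).congr fun t ht => ?_
  have hw := (hpos t ht).ne'
  rcases eq_or_ne t 0 with rfl | ht0
  · simp [hv.map_left]
  · have hφt := (hφ.pos_of_ne_zero ht0).ne'
    simp only [shootingDeriv, shootingSolution, Pi.add_apply, Pi.mul_apply, Pi.pow_apply]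
    field_simp

lemma le_rayleigh_of_radialSolution_pos (hφ : IsPositiveSolution V E r φ φ') (hr : 0 ≤ r)
    (hv : IsTestFunction V φ φ' r v) (hpos : ∀ t ∈ Icc 0 r, 0 < radialSolution (φ ^ 2) κ t) :
    E + κ ≤ Rayleigh V v r := by
  have hne : ∀ t ∈ Ioo 0 r, shootingSolution φ κ t ≠ 0 := fun t ht =>
    (mul_pos (hφ.pos_of_ne_zero ht.1.ne') (hpos t (Ioo_subset_Icc_self ht))).ne'
  have hsq : ContinuousOn (fun t => v t ^ 2) (uIcc 0 r) :=
    uIcc_of_le hr ▸ hv.continuousOn.pow 2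
  rw [Rayleigh, le_div_iff₀ hv.integral_sq_pos]
  exact mul_integral_sq_le_integral_energy hr (fun t _ => hφ.hasDerivAt_shootingSolution κ t)
    (fun t => hφ.hasDerivAt_shootingDeriv κ) hne hv.differentiableAt hv.map_left hv.map_right
    (hφ.continuousOn_boundary_shootingSolution hv hpos) hsq.intervalIntegrable
    hv.intervalIntegrable_energy

theorem exists_isDirichletEigenvalue_le_rayleigh (hφ : IsPositiveSolution V E r φ φ') (hr : 0 < r)
    (hv : IsTestFunction V φ φ' r v) : ∃ μ ≤ Rayleigh V v r, IsDirichletEigenvalue V r μ := by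
  have hbound : ∀ κ, (∀ t ∈ Icc 0 r, 0 < radialSolution (φ ^ 2) κ t) → κ ≤ Rayleigh V v r - E :=
    fun κ hpos => by linarith [hφ.le_rayleigh_of_radialSolution_pos hr.le hv hpos]
  have hnonneg : 0 ≤ Rayleigh V v r - E := hbound 0 fun t _ => by simp [radialSolution_zero_left]
  obtain ⟨κ, hκ, hκr⟩ := hφ.sq.exists_radialSolution_eq_zero hr.le hnonneg hbound
  exact ⟨E + κ, by linarith [hκ.2], hφ.isDirichletEigenvalue_of_radialSolution_eq_zero hr hκr⟩

end IsPositiveSolution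

end GroundState

section PoschlTeller

/-- The hyperbolic Pöschl–Teller potential `A + C / sinh² t`, of which `V2 n` is an instance. -/
noncomputable def poschlTeller (A C t : ℝ) : ℝ :=
  A + C / sinh t ^ 2

lemma V2_eq_poschlTeller (n : ℕ) :
    V2 n = poschlTeller (((n : ℝ) - 1) ^ 2 / 4) (((n : ℝ) - 1) * ((n : ℝ) + 1) / 4) := by
  ext t
  rw [V2, poschlTeller]
  ring

lemma hasDerivAt_abs_sinh_rpow {a : ℝ} (ha : 1 < a) (t : ℝ) :
    HasDerivAt (fun t => |sinh t| ^ a) (a * (cosh t / sinh t) * |sinh t| ^ a) t := by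
  refine ((hasDerivAt_abs_rpow (sinh t) ha).comp t (hasDerivAt_sinh t)).congr_deriv ?_
  rcases eq_or_ne (sinh t) 0 with hs | hs
  · simp [hs]
  · rw [rpow_sub (abs_pos.2 hs), rpow_two, sq_abs]
    field_simp

lemma continuous_deriv_abs_sinh_rpow {a : ℝ} (ha : 1 < a) :
    Continuous fun t => a * (cosh t / sinh t) * |sinh t| ^ a := by
  rw [← funext fun t => (hasDerivAt_abs_sinh_rpow ha t).deriv]
  exact ((contDiff_norm_rpow ha).comp contDiff_sinh).continuous_deriv le_rfl

lemma isRadialWeight_abs_sinh_rpow {a : ℝ} (ha : 0 < a) :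
    IsRadialWeight fun t => |sinh t| ^ a where
  continuous := continuous_sinh.abs.rpow_const fun _ => .inr ha.le
  le_of_abs_le h := by
    refine rpow_le_rpow (abs_nonneg _) ?_ ha.le
    simpa only [abs_sinh] using sinh_le_sinh.2 h
  pos_of_ne_zero h := rpow_pos_of_pos (abs_pos.2 (sinh_ne_zero.2 h)) a

lemma isPositiveSolution_abs_sinh_rpow {a : ℝ} (ha : 1 < a) (A r : ℝ) :
    IsPositiveSolution (poschlTeller A (a * (a - 1))) (A - a ^ 2) r
      (fun t => |sinh t| ^ a) (fun t => a * (cosh t / sinh t) * |sinh t| ^ a) where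
  toIsRadialWeight := isRadialWeight_abs_sinh_rpow (one_pos.trans ha)
  map_zero := by simp [(one_pos.trans ha).ne']
  hasDerivAt := hasDerivAt_abs_sinh_rpow ha
  continuous_deriv := continuous_deriv_abs_sinh_rpow ha
  hasDerivAt_deriv t ht := by
    have hsinh := (sinh_pos_iff.2 ht.1).ne'
    have hcoth := (hasDerivAt_cosh t).fun_div (hasDerivAt_sinh t) hsinh
    refine ((hcoth.const_mul a).fun_mul (hasDerivAt_abs_sinh_rpow ha t)).congr_deriv ?_
    rw [poschlTeller]
    field_simp
    rw [cosh_sq]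
    ring

lemma continuous_sin_sq_mul_coth (b : ℝ) :
    Continuous fun t => sin (b * t) ^ 2 * (cosh t / sinh t) := by
  refine continuous_iff_continuousAt.2 fun t => ?_
  rcases eq_or_ne t 0 with rfl | ht
  · have hbound (t : ℝ) :
        ‖sin (b * t) ^ 2 * (cosh t / sinh t)‖ ≤ |b| * (|sin (b * t)| * cosh t) := by
      rw [norm_mul, norm_div, norm_pow, norm_of_nonneg (cosh_pos t).le, ← mul_div_assoc]
      refine div_le_of_le_mul₀ (norm_nonneg _) (by have := cosh_pos t; positivity) ?_
      calc |sin (b * t)| ^ 2 * cosh t = |sin (b * t)| * cosh t * |sin (b * t)| := by ring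
        _ ≤ |sin (b * t)| * cosh t * (|b| * |sinh t|) :=
            mul_le_mul_of_nonneg_left (abs_sin_mul_le b t)
              (mul_nonneg (abs_nonneg _) (cosh_pos t).le)
        _ = |b| * (|sin (b * t)| * cosh t) * |sinh t| := by ring
    have hcont : Continuous fun t => |b| * (|sin (b * t)| * cosh t) := by fun_prop
    simpa [ContinuousAt] using squeeze_zero_norm hbound (by simpa using hcont.tendsto 0)
  · exact ContinuousAt.mul (by fun_prop)
      (continuous_cosh.continuousAt.div continuous_sinh.continuousAt (sinh_ne_zero.2 ht))

variable {r : ℝ}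

lemma integral_sin_sq_pi_div (hr : r ≠ 0) : ∫ t in (0 : ℝ)..r, sin (π / r * t) ^ 2 = r / 2 := by
  rw [intervalIntegral.integral_comp_mul_left (fun x => sin x ^ 2) (by positivity),
    integral_sin_sq, div_mul_cancel₀ _ hr]
  simp only [mul_zero, sin_zero, zero_mul, sin_pi, sub_zero, zero_add, smul_eq_mul]
  field_simp

lemma integral_cos_sq_pi_div (hr : r ≠ 0) : ∫ t in (0 : ℝ)..r, cos (π / r * t) ^ 2 = r / 2 := by
  simp_rw [cos_sq']
  rw [intervalIntegral.integral_sub (by simp) (Continuous.intervalIntegrable (by fun_prop) _ _),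
    integral_sin_sq_pi_div hr, integral_one]
  ring

lemma deriv_sin_mul (b t : ℝ) : deriv (fun t => sin (b * t)) t = b * cos (b * t) := by
  rw [deriv_comp_mul_left b sin t, Real.deriv_sin, smul_eq_mul]

lemma energy_sin_poschlTeller (A C b t : ℝ) :
    deriv (fun t => sin (b * t)) t ^ 2 + poschlTeller A C t * sin (b * t) ^ 2
      = b ^ 2 * cos (b * t) ^ 2 + A * sin (b * t) ^ 2
        + C * (sin (b * t) ^ 2 / sinh t ^ 2) := by
  rw [deriv_sin_mul, poschlTeller]
  ring

lemma isTestFunction_sin_pi_div {a : ℝ} (A C : ℝ) (hr : 0 < r) :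
    IsTestFunction (poschlTeller A C) (fun t => |sinh t| ^ a)
      (fun t => a * (cosh t / sinh t) * |sinh t| ^ a) r (fun t => sin (π / r * t)) where
  map_left := by simp
  map_right := by simp [div_mul_cancel₀ _ hr.ne']
  continuousOn := by fun_prop
  differentiableAt t _ := by fun_prop
  intervalIntegrable_energy := by
    simp_rw [energy_sin_poschlTeller]
    exact (Continuous.intervalIntegrable (by fun_prop) _ _).add
      ((intervalIntegrable_sin_sq_div_sinh_sq _ 0 r).const_mul C)
  integral_sq_pos := by
    rw [integral_sin_sq_pi_div hr.ne']
    positivity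
  continuousOn_boundary := by
    refine ((continuous_sin_sq_mul_coth (π / r)).const_mul a).continuousOn.congr fun t ht => ?_
    rcases ht.1.eq_or_lt with rfl | ht0
    · simp
    · have hφ := (rpow_pos_of_pos (abs_pos.2 (sinh_ne_zero.2 ht0.ne')) a).ne'
      field_simp

lemma rayleigh_sin_poschlTeller (A C : ℝ) (hr : 0 < r) :
    Rayleigh (poschlTeller A C) (fun t => sin (π / r * t)) r
      = A + π ^ 2 / r ^ 2
        + 2 * C / r * ∫ t in (0 : ℝ)..r, sin (π / r * t) ^ 2 / sinh t ^ 2 := by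
  have hcos : IntervalIntegrable (fun t => (π / r) ^ 2 * cos (π / r * t) ^ 2) volume 0 r :=
    Continuous.intervalIntegrable (by fun_prop) _ _
  have hsin : IntervalIntegrable (fun t => A * sin (π / r * t) ^ 2) volume 0 r :=
    Continuous.intervalIntegrable (by fun_prop) _ _
  simp_rw [Rayleigh, energy_sin_poschlTeller]
  rw [intervalIntegral.integral_add (hcos.add hsin)
      ((intervalIntegrable_sin_sq_div_sinh_sq _ 0 r).const_mul C),
    intervalIntegral.integral_add hcos hsin]
  simp_rw [intervalIntegral.integral_const_mul, integral_sin_sq_pi_div hr.ne',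
    integral_cos_sq_pi_div hr.ne']
  field_simp
  ring

theorem rayleigh_sin_poschlTeller_lt (A : ℝ) {C : ℝ} (hC : 0 < C) (hr : 0 < r) :
    Rayleigh (poschlTeller A C) (fun t => sin (π / r * t)) r
      < A + π ^ 2 / r ^ 2 + C * π ^ 4 / (3 * r ^ 3) := by
  rw [rayleigh_sin_poschlTeller A C hr, add_lt_add_iff_left]
  calc 2 * C / r * ∫ t in (0 : ℝ)..r, sin (π / r * t) ^ 2 / sinh t ^ 2
      < 2 * C / r * ((π / r) ^ 2 * (π ^ 2 / 6)) :=
        mul_lt_mul_of_pos_left (integral_sin_sq_div_sinh_sq_lt (by positivity) hr) (by positivity)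
    _ = C * π ^ 4 / (3 * r ^ 3) := by
        field_simp
        norm_num

theorem exists_isDirichletEigenvalue_poschlTeller_le {a : ℝ} (ha : 1 < a) (A : ℝ) (hr : 0 < r) :
    ∃ μ ≤ Rayleigh (poschlTeller A (a * (a - 1))) (fun t => sin (π / r * t)) r,
      IsDirichletEigenvalue (poschlTeller A (a * (a - 1))) r μ :=
  (isPositiveSolution_abs_sinh_rpow ha A r).exists_isDirichletEigenvalue_le_rayleigh hr
    (isTestFunction_sin_pi_div A (a * (a - 1)) hr)

end PoschlTeller

/-- For `n ≥ 2`, `r > 0` and `v(t) = sin(πt/r)`, the Rayleigh quotient of `v` for `V₂` is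
strictly less than `(n−1)²/4 + π²/r² + (n−1)(n+1)π⁴/(12r³)`; consequently the first
Dirichlet eigenvalue of `-d²/dt² + V₂` on `[0, r]` (i.e. `λ₂(B_r)` for the geodesic ball of
radius `r` in `ℍⁿ`) is strictly less than this bound. -/
theorem rayleigh_bound_V2 (n : ℕ) (hn : 2 ≤ n) (r : ℝ) (hr : 0 < r) :
    Rayleigh (V2 n) (fun t => Real.sin (Real.pi * t / r)) r
      < ((n : ℝ) - 1) ^ 2 / 4 + Real.pi ^ 2 / r ^ 2
        + ((n : ℝ) - 1) * ((n : ℝ) + 1) * Real.pi ^ 4 / (12 * r ^ 3) ∧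
    ∀ lam : ℝ, IsDirichletEigenvalue (V2 n) r lam →
      (∀ μ : ℝ, IsDirichletEigenvalue (V2 n) r μ → lam ≤ μ) →
      lam < ((n : ℝ) - 1) ^ 2 / 4 + Real.pi ^ 2 / r ^ 2
        + ((n : ℝ) - 1) * ((n : ℝ) + 1) * Real.pi ^ 4 / (12 * r ^ 3) := by
  set A : ℝ := ((n : ℝ) - 1) ^ 2 / 4
  set C : ℝ := ((n : ℝ) - 1) * ((n : ℝ) + 1) / 4 with hC
  set a : ℝ := ((n : ℝ) + 1) / 2 with ha
  have hn' : (2 : ℝ) ≤ n := Nat.ofNat_le_cast.2 hn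
  have ha_one : 1 < a := by rw [ha]; linarith
  have hCa : C = a * (a - 1) := by rw [hC, ha]; ring
  have hC_pos : 0 < C := by rw [hCa]; nlinarith
  have hsin : (fun t => sin (π * t / r)) = fun t => sin (π / r * t) := by
    simp only [mul_div_right_comm]
  have hlt := rayleigh_sin_poschlTeller_lt A hC_pos hr
  rw [show C * π ^ 4 / (3 * r ^ 3) = ((n : ℝ) - 1) * ((n : ℝ) + 1) * π ^ 4 / (12 * r ^ 3) by
    rw [hC]; ring] at hlt
  obtain ⟨μ, hμ, heigen⟩ := exists_isDirichletEigenvalue_poschlTeller_le ha_one A hr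
  rw [← hCa] at hμ heigen
  rw [V2_eq_poschlTeller, hsin]
  exact ⟨hlt, fun lam _ hleast => (hleast μ heigen).trans_lt (hμ.trans_lt hlt)⟩
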